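/- Fourth-order two-body error term (paper eq. A17a): for i ≠ j and any phase-space point (x,p) with r_ij ≠ 0, the left-nested canonical Poisson bracket satisfies {{{{V_ij, T}, T}, T}, T}(x,p) = −3 (G (m i)(m j) / r_ij⁹) · ( 35 (v_ij · x_ij)⁴ − 30 r_ij² ‖v_ij‖² (v_ij · x_ij)² + 3 r_ij⁴ ‖v_ij‖⁴ ). -/

import Mathlib

open scoped RealInnerProductSpace BigOperators

noncomputable section

/-- Three-dimensional Euclidean space. -/
abbrev E3 : Type := EuclideanSpace ℝ (Fin 3)

/-- Phase space for `N` particles: positions and momenta. -/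
abbrev Phase (N : ℕ) : Type := (Fin N → E3) × (Fin N → E3)

/-- Gradient of a phase-space function with respect to the `k`-th position. -/
def gradPos {N : ℕ} (A : Phase N → ℝ) (k : Fin N) (w : Phase N) : E3 :=
  gradient (fun y => A (Function.update w.1 k y, w.2)) (w.1 k)

/-- Gradient of a phase-space function with respect to the `k`-th momentum. -/
def gradMom {N : ℕ} (A : Phase N → ℝ) (k : Fin N) (w : Phase N) : E3 :=
  gradient (fun y => A (w.1, Function.update w.2 k y)) (w.2 k)

/-- Canonical Poisson bracket of two phase-space functions. -/
def poisson {N : ℕ} (A B : Phase N → ℝ) (w : Phase N) : ℝ :=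
  ∑ k, (⟪gradPos A k w, gradMom B k w⟫ - ⟪gradMom A k w, gradPos B k w⟫)

/-- Kinetic energy `T = Σ_i ‖p_i‖²/(2 m_i)`. -/
def kinetic {N : ℕ} (m : Fin N → ℝ) (w : Phase N) : ℝ :=
  ∑ i, ‖w.2 i‖ ^ 2 / (2 * m i)

/-- Pair potential `V_ij = −G m_i m_j / ‖x_i − x_j‖`. -/
def pairPot {N : ℕ} (G : ℝ) (m : Fin N → ℝ) (i j : Fin N) (w : Phase N) : ℝ :=
  -(G * m i * m j) / ‖w.1 i - w.1 j‖

/-- Velocity vector field. -/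
def velF {N : ℕ} (m : Fin N → ℝ) (w : Phase N) : Fin N → E3 := fun k => (m k)⁻¹ • w.2 k

lemma gradMom_kinetic {N : ℕ} (m : Fin N → ℝ) (hm : ∀ i, 0 < m i) (k : Fin N) (w : Phase N) :
    gradMom (kinetic m) k w = (m k)⁻¹ • w.2 k := by
  unfold gradMom
  apply HasGradientAt.gradient
  have e : (fun y : E3 => kinetic m (w.1, Function.update w.2 k y)) =
      fun y : E3 => ‖y‖ ^ 2 * (2 * m k)⁻¹ +
        ∑ i ∈ Finset.univ.erase k, ‖w.2 i‖ ^ 2 / (2 * m i) := by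
    funext y
    unfold kinetic
    rw [← Finset.add_sum_erase _ _ (Finset.mem_univ k)]
    congr 1
    · simp [div_eq_mul_inv]
    · apply Finset.sum_congr rfl
      intro i hi
      simp [Function.update_of_ne (Finset.ne_of_mem_erase hi)]
  rw [e, hasGradientAt_iff_hasFDerivAt]
  have h := (((hasFDerivAt_id (𝕜 := ℝ) (w.2 k)).norm_sq).mul_const (2 * m k)⁻¹).add_const
    (∑ i ∈ Finset.univ.erase k, ‖w.2 i‖ ^ 2 / (2 * m i))
  refine h.congr_fderiv ?_
  ext y
  have := (hm k).ne'
  simp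
  field_simp

lemma gradPos_kinetic {N : ℕ} (m : Fin N → ℝ) (k : Fin N) (w : Phase N) :
    gradPos (kinetic m) k w = 0 := by
  unfold gradPos kinetic
  simp [gradient]

lemma poisson_kinetic {N : ℕ} (m : Fin N → ℝ) (hm : ∀ i, 0 < m i) (A : Phase N → ℝ) (w : Phase N)
    (hA : DifferentiableAt ℝ A w) :
    poisson A (kinetic m) w = fderiv ℝ A w (velF m w, 0) := by
  have hk : ∀ k, ⟪gradPos A k w, gradMom (kinetic m) k w⟫
      - ⟪gradMom A k w, gradPos (kinetic m) k w⟫ =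
      fderiv ℝ A w (Pi.single k (velF m w k), 0) := by
    intro k
    rw [gradMom_kinetic m hm, gradPos_kinetic, inner_zero_right, sub_zero]
    unfold gradPos gradient
    rw [InnerProductSpace.toDual_symm_apply]
    have h1 : HasFDerivAt (fun y : E3 => ((Function.update w.1 k y, w.2) : Phase N)) _ (w.1 k) :=
      (hasFDerivAt_update (𝕜 := ℝ) w.1 (i := k) (w.1 k)).prodMk (hasFDerivAt_const w.2 (w.1 k))
    have hA' : HasFDerivAt A (fderiv ℝ A w) (Function.update w.1 k (w.1 k), w.2) := by
      rw [Function.update_eq_self]; exact hA.hasFDerivAt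
    have h2 := hA'.comp (w.1 k) h1
    have h3 := h2.fderiv
    simp only [Function.comp_def] at h3
    rw [h3]
    simp only [ContinuousLinearMap.comp_apply, ContinuousLinearMap.prod_apply,
      zero_apply]
    congr 2
    ext i
    by_cases h : i = k
    · subst h; simp [velF]
    · simp [h]
  unfold poisson
  rw [Finset.sum_congr rfl fun k _ => hk k, ← map_sum]
  congr 1
  ext1
  · rw [Prod.fst_sum]; exact Finset.univ_sum_single _
  · rw [Prod.snd_sum]; simp

/-- Relative position. -/
def relX {N : ℕ} (i j : Fin N) (w : Phase N) : E3 := w.1 i - w.1 j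
/-- Relative velocity. -/
def relV {N : ℕ} (m : Fin N → ℝ) (i j : Fin N) (w : Phase N) : E3 :=
  (m i)⁻¹ • w.2 i - (m j)⁻¹ • w.2 j

lemma step {N : ℕ} (m : Fin N → ℝ) (hm : ∀ i, 0 < m i) (i j : Fin N)
    (A : Phase N → ℝ) (g : ℝ × ℝ × ℝ → ℝ) (d : ℝ × ℝ × ℝ → ℝ)
    (hA : ∀ w, ‖relX i j w‖ ≠ 0 →
      A w = g (‖relX i j w‖, ⟪relV m i j w, relX i j w⟫, ‖relV m i j w‖ ^ 2))
    (hg : ∀ r b c : ℝ, r ≠ 0 → DifferentiableAt ℝ g (r, b, c))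
    (hd : ∀ r b c : ℝ, r ≠ 0 → ∀ ρ β : ℝ → ℝ, ρ 0 = r → β 0 = b →
      HasDerivAt ρ (b / r) 0 → HasDerivAt β c 0 →
      HasDerivAt (fun t => g (ρ t, β t, c)) (d (r, b, c)) 0) :
    ∀ w, ‖relX i j w‖ ≠ 0 → poisson A (kinetic m) w =
      d (‖relX i j w‖, ⟪relV m i j w, relX i j w⟫, ‖relV m i j w‖ ^ 2) := by
  intro w hw
  have hX : Differentiable ℝ (relX (N := N) i j) := by unfold relX; fun_prop
  have hV : Differentiable ℝ (relV (N := N) m i j) := by unfold relV; fun_prop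
  have hw0 : relX i j w ≠ 0 := norm_ne_zero_iff.mp hw
  have hev : A =ᶠ[nhds w] fun w =>
      g (‖relX i j w‖, ⟪relV m i j w, relX i j w⟫, ‖relV m i j w‖ ^ 2) := by
    filter_upwards [(hX.continuous.norm.continuousAt (x := w)).eventually_ne hw] with z hz
    exact hA z hz
  have hdF : DifferentiableAt ℝ (fun w =>
      g (‖relX i j w‖, ⟪relV m i j w, relX i j w⟫, ‖relV m i j w‖ ^ 2)) w := by
    refine DifferentiableAt.comp w (hg _ _ _ hw) ?_
    exact ((hX w).norm ℝ hw0).prodMk (((hV w).inner ℝ (hX w)).prodMk ((hV w).norm_sq ℝ))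
  rw [poisson_kinetic m hm A w (hev.differentiableAt_iff.mpr hdF), hev.fderiv_eq]
  have hl := hdF.hasFDerivAt.hasLineDerivAt (velF m w, 0)
  unfold HasLineDerivAt at hl
  have eX : ∀ t : ℝ, relX i j (w + t • (velF m w, (0 : Fin N → E3))) =
      relX i j w + t • relV m i j w := by
    intro t
    simp only [relX, relV, velF, Prod.fst_add, Prod.smul_fst, Pi.add_apply, Pi.smul_apply]
    module
  have eV : ∀ t : ℝ, relV m i j (w + t • (velF m w, (0 : Fin N → E3))) = relV m i j w := by
    intro t
    simp [relV]
  simp only [eX, eV] at hl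
  refine hl.unique ?_
  have hlin : HasDerivAt (fun t : ℝ => relX i j w + t • relV m i j w) (relV m i j w) 0 := by
    simpa using ((hasDerivAt_id (0:ℝ)).smul_const (relV m i j w)).const_add (relX i j w)
  refine hd _ _ _ hw _ _ (by simp) (by simp) ?_ ?_
  · have h := hlin.norm_sq.sqrt (by simpa using hw0)
    simp only [Real.sqrt_sq (norm_nonneg _)] at h
    convert h using 1
    simp [real_inner_comm]
    field_simp
  · have h := (hasDerivAt_const (0:ℝ) (relV m i j w)).inner ℝ hlin
    simpa using h

/-- Fourth-order two-body error term (paper eq. A17a):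
`{{{{V_ij,T},T},T},T} = −3 (G m_i m_j / r_ij⁹)
  (35 (v_ij·x_ij)⁴ − 30 r_ij² v_ij² (v_ij·x_ij)² + 3 r_ij⁴ v_ij⁴)`. -/
theorem fourth_order_VTTTT {N : ℕ} (G : ℝ) (hG : 0 < G) (m : Fin N → ℝ)
    (hm : ∀ i, 0 < m i) (i j : Fin N) (hij : i ≠ j) (w : Phase N)
    (hr : ‖w.1 i - w.1 j‖ ≠ 0) (xij vij : E3)
    (hx : xij = w.1 i - w.1 j)
    (hv : vij = (m i)⁻¹ • w.2 i - (m j)⁻¹ • w.2 j) :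
    poisson (poisson (poisson (poisson (pairPot G m i j) (kinetic m))
        (kinetic m)) (kinetic m)) (kinetic m) w =
      -3 * (G * m i * m j / ‖xij‖ ^ 9) *
        (35 * ⟪vij, xij⟫ ^ 4 -
          30 * ‖xij‖ ^ 2 * ‖vij‖ ^ 2 * ⟪vij, xij⟫ ^ 2 +
          3 * ‖xij‖ ^ 4 * ‖vij‖ ^ 4) := by
  have h0 : ∀ w, ‖relX i j w‖ ≠ 0 → pairPot G m i j w =
      (fun q : ℝ × ℝ × ℝ => -(G * m i * m j) / q.1)
        (‖relX i j w‖, ⟪relV m i j w, relX i j w⟫, ‖relV m i j w‖ ^ 2) := fun w _ => rfl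
  have h1 := step m hm i j _
    (fun q : ℝ × ℝ × ℝ => -(G * m i * m j) / q.1) (fun q => (G * m i * m j) * (q.2.1 / q.1 ^ 3)) h0
    (by intro r b c h; fun_prop (disch := simpa using h))
    (by
      intro r b c h ρ β e1 e2 h1 h2
      have := (hasDerivAt_const (0:ℝ) (-(G * m i * m j))).fun_div h1 (by rwa [e1])
      refine this.congr_deriv ?_
      rw [e1]; field_simp; ring)
  have h2 := step m hm i j _
    (fun q => (G * m i * m j) * (q.2.1 / q.1 ^ 3))
    (fun q => (G * m i * m j) * (q.2.2 / q.1 ^ 3 - 3 * q.2.1 ^ 2 / q.1 ^ 5)) h1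
    (by intro r b c h; fun_prop (disch := simpa using h))
    (by
      intro r b c h ρ β e1 e2 h1 h2
      have := (h2.fun_div (h1.fun_pow 3) (by rw [e1]; positivity)).const_mul (G * m i * m j)
      refine this.congr_deriv ?_
      rw [e1, e2]; field_simp; ring)
  have h3 := step m hm i j _
    (fun q => (G * m i * m j) * (q.2.2 / q.1 ^ 3 - 3 * q.2.1 ^ 2 / q.1 ^ 5))
    (fun q => (G * m i * m j) * (-9 * q.2.1 * q.2.2 / q.1 ^ 5 + 15 * q.2.1 ^ 3 / q.1 ^ 7)) h2
    (by intro r b c h; fun_prop (disch := simpa using h))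
    (by
      intro r b c h ρ β e1 e2 h1 h2
      have := (((hasDerivAt_const (0:ℝ) c).fun_div (h1.fun_pow 3) (by rw [e1]; positivity)).fun_sub
        (((h2.fun_pow 2).const_mul 3).fun_div (h1.fun_pow 5)
          (by rw [e1]; positivity))).const_mul (G * m i * m j)
      refine this.congr_deriv ?_
      rw [e1, e2]; field_simp; ring)
  have h4 := step m hm i j _
    (fun q => (G * m i * m j) * (-9 * q.2.1 * q.2.2 / q.1 ^ 5 + 15 * q.2.1 ^ 3 / q.1 ^ 7))
    (fun q => -3 * (G * m i * m j / q.1 ^ 9) *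
        (35 * q.2.1 ^ 4 - 30 * q.1 ^ 2 * q.2.2 * q.2.1 ^ 2 + 3 * q.1 ^ 4 * q.2.2 ^ 2)) h3
    (by intro r b c h; fun_prop (disch := simpa using h))
    (by
      intro r b c h ρ β e1 e2 h1 h2
      have := ((((h2.const_mul (-9)).mul_const c).fun_div (h1.fun_pow 5)
          (by rw [e1]; positivity)).fun_add
        (((h2.fun_pow 3).const_mul 15).fun_div (h1.fun_pow 7)
          (by rw [e1]; positivity))).const_mul (G * m i * m j)
      refine this.congr_deriv ?_
      rw [e1, e2]; field_simp; ring)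
  have h := h4 w hr
  rw [h, hx, hv]
  simp only [relX, relV]
  ring
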